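/- arXiv:1903.11823 — 2 statements merged into one kernel-verified Lean document; each statement's English description precedes it below -/
import Mathlib

section
/- Let x be an element of the second exterior power ⋀²(ℂ⁴) of ℂ⁴ (i.e., a ℂ-linear combination of wedge products v∧w of vectors v, w ∈ ℂ⁴). Then x ∧ x = 0 in the exterior algebra if and only if x is decomposable, i.e., there exist vectors v, w ∈ ℂ⁴ with x = v∧w. (This is the identification, used in the paper, of null 2-vectors in Λ²ℂ⁴ with complex 2-planes in ℂ⁴.) -/
/-- The inclusion of `ℂ⁴` into its exterior algebra. -/
noncomputable def ι4 : (Fin 4 → ℂ) →ₗ[ℂ] ExteriorAlgebra ℂ (Fin 4 → ℂ) :=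
  ExteriorAlgebra.ι ℂ

noncomputable def E4 (i : Fin 4) : ExteriorAlgebra ℂ (Fin 4 → ℂ) := ι4 (Pi.single i 1)

lemma E4_sq (i : Fin 4) : E4 i * E4 i = 0 := ExteriorAlgebra.ι_sq_zero _

lemma E4_swap (i j : Fin 4) : E4 i * E4 j = -(E4 j * E4 i) :=
  eq_neg_of_add_eq_zero_left (ExteriorAlgebra.ι_add_mul_swap _ _)

lemma E4_sq_assoc (i : Fin 4) (z : ExteriorAlgebra ℂ (Fin 4 → ℂ)) :
    E4 i * (E4 i * z) = 0 := by rw [← mul_assoc, E4_sq, zero_mul]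

lemma E4_swap_assoc (i j : Fin 4) (z : ExteriorAlgebra ℂ (Fin 4 → ℂ)) :
    E4 i * (E4 j * z) = -(E4 j * (E4 i * z)) := by
  rw [← mul_assoc, E4_swap, neg_mul, mul_assoc]

/-- The 2-vector with given Plücker coordinates. -/
noncomputable def bivec (a b c d e f : ℂ) : ExteriorAlgebra ℂ (Fin 4 → ℂ) :=
  a • (E4 0 * E4 1) + b • (E4 0 * E4 2) + c • (E4 0 * E4 3) +
    d • (E4 1 * E4 2) + e • (E4 1 * E4 3) + f • (E4 2 * E4 3)

lemma ι4_expand (v : Fin 4 → ℂ) :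
    ι4 v = v 0 • E4 0 + v 1 • E4 1 + v 2 • E4 2 + v 3 • E4 3 := by
  unfold E4
  rw [← map_smul, ← map_smul, ← map_smul, ← map_smul, ← map_add, ← map_add, ← map_add]
  congr 1
  ext i
  fin_cases i <;> simp

lemma wedge_eq_bivec (v w : Fin 4 → ℂ) :
    ι4 v * ι4 w = bivec (v 0 * w 1 - v 1 * w 0) (v 0 * w 2 - v 2 * w 0)
      (v 0 * w 3 - v 3 * w 0) (v 1 * w 2 - v 2 * w 1) (v 1 * w 3 - v 3 * w 1)
      (v 2 * w 3 - v 3 * w 2) := by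
  rw [ι4_expand v, ι4_expand w, bivec]
  simp only [mul_add, add_mul, smul_mul_assoc, mul_smul_comm, E4_sq, E4_swap 1 0,
    E4_swap 2 0, E4_swap 3 0, E4_swap 2 1, E4_swap 3 1, E4_swap 3 2]
  module

lemma bivec_sq (a b c d e f : ℂ) :
    bivec a b c d e f * bivec a b c d e f =
      (2 * (a * f - b * e + c * d)) • (E4 0 * (E4 1 * (E4 2 * E4 3))) := by
  simp only [bivec, mul_add, add_mul, smul_mul_assoc, mul_smul_comm, mul_assoc, E4_sq,
    E4_sq_assoc, E4_swap 1 0,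
    E4_swap 2 0, E4_swap 3 0, E4_swap 2 1, E4_swap 3 1, E4_swap 3 2, E4_swap_assoc 1 0,
    E4_swap_assoc 2 0, E4_swap_assoc 3 0, E4_swap_assoc 2 1, E4_swap_assoc 3 1,
    E4_swap_assoc 3 2, mul_neg, mul_zero, neg_zero, smul_zero]
  module

lemma E4_top_ne_zero : E4 0 * (E4 1 * (E4 2 * E4 3)) ≠ 0 := by
  intro h
  let F : ∀ i, (Fin 4 → ℂ) [⋀^Fin i]→ₗ[ℂ] ℂ :=
    Function.update (fun _ => 0) 4 Matrix.detRowAlternating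
  have h1 : E4 0 * (E4 1 * (E4 2 * E4 3)) =
      ExteriorAlgebra.ιMulti ℂ 4 (fun i : Fin 4 => (Pi.single i 1 : Fin 4 → ℂ)) := by
    simp [ExteriorAlgebra.ιMulti_apply, E4, ι4]
    rfl
  have h2 := congrArg (ExteriorAlgebra.liftAlternating F) h
  rw [h1, ExteriorAlgebra.liftAlternating_apply_ιMulti, map_zero] at h2
  have h3 : F 4 = Matrix.detRowAlternating := Function.update_self ..
  rw [h3] at h2
  have h4 : (fun i : Fin 4 => (Pi.single i 1 : Fin 4 → ℂ)) = (1 : Matrix (Fin 4) (Fin 4) ℂ) := by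
    ext i j
    simp [Matrix.one_apply, Pi.single_apply, eq_comm]
  rw [h4] at h2
  exact one_ne_zero ((Matrix.det_one (n := Fin 4) (R := ℂ)).symm.trans h2)

lemma exists_bivec (x : ExteriorAlgebra ℂ (Fin 4 → ℂ))
    (hx : x ∈ Submodule.span ℂ
      {z : ExteriorAlgebra ℂ (Fin 4 → ℂ) | ∃ v w : Fin 4 → ℂ, z = ι4 v * ι4 w}) :
    ∃ a b c d e f, x = bivec a b c d e f := by
  induction hx using Submodule.span_induction with
  | mem x h =>
    obtain ⟨v, w, rfl⟩ := h
    exact ⟨_, _, _, _, _, _, wedge_eq_bivec v w⟩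
  | zero => exact ⟨0, 0, 0, 0, 0, 0, by simp [bivec]⟩
  | add x y _ _ h1 h2 =>
    obtain ⟨a, b, c, d, e, f, rfl⟩ := h1
    obtain ⟨a2, b2, c2, d2, e2, f2, rfl⟩ := h2
    exact ⟨a + a2, b + b2, c + c2, d + d2, e + e2, f + f2, by unfold bivec; module⟩
  | smul r x _ h1 =>
    obtain ⟨a, b, c, d, e, f, rfl⟩ := h1
    exact ⟨r * a, r * b, r * c, r * d, r * e, r * f, by unfold bivec; module⟩

lemma bivec_decomposable (a b c d e f : ℂ) (h : a * f - b * e + c * d = 0) :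
    ∃ v w : Fin 4 → ℂ, bivec a b c d e f = ι4 v * ι4 w := by
  by_cases ha : a ≠ 0
  · refine ⟨![1, 0, -d / a, -e / a], ![0, a, b, c], ?_⟩
    rw [wedge_eq_bivec]
    congr 1 <;> simp <;> field_simp <;> linear_combination h
  by_cases hb : b ≠ 0
  · refine ⟨![1, d / b, 0, -f / b], ![0, a, b, c], ?_⟩
    rw [wedge_eq_bivec]
    congr 1 <;> simp <;> field_simp <;> linear_combination -h
  by_cases hc : c ≠ 0
  · refine ⟨![1, e / c, f / c, 0], ![0, a, b, c], ?_⟩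
    rw [wedge_eq_bivec]
    congr 1 <;> simp <;> field_simp <;> linear_combination h
  push Not at ha hb hc
  subst ha hb hc
  by_cases hd : d ≠ 0
  · refine ⟨![0, 1, 0, -f / d], ![0, 0, d, e], ?_⟩
    rw [wedge_eq_bivec]
    congr 1 <;> simp <;> field_simp
  push Not at hd
  subst hd
  refine ⟨![0, e, f, 0], ![0, 0, 0, 1], ?_⟩
  rw [wedge_eq_bivec]
  congr 1 <;> simp

/-- A 2-vector `x ∈ ⋀²ℂ⁴` (an element of the span of wedge products `v∧w`) satisfies
`x ∧ x = 0` if and only if it is decomposable, i.e. `x = v∧w` for some `v, w ∈ ℂ⁴`. -/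
theorem wedge_square_zero_iff_decomposable
    (x : ExteriorAlgebra ℂ (Fin 4 → ℂ))
    (hx : x ∈ Submodule.span ℂ
      {z : ExteriorAlgebra ℂ (Fin 4 → ℂ) | ∃ v w : Fin 4 → ℂ, z = ι4 v * ι4 w}) :
    x * x = 0 ↔ ∃ v w : Fin 4 → ℂ, x = ι4 v * ι4 w := by
  constructor
  · intro h
    obtain ⟨a, b, c, d, e, f, rfl⟩ := exists_bivec x hx
    rw [bivec_sq] at h
    have h2 := (smul_eq_zero.mp h).resolve_right E4_top_ne_zero
    exact bivec_decomposable a b c d e f ((mul_eq_zero.mp h2).resolve_left two_ne_zero)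
  · rintro ⟨v, w, rfl⟩
    rw [wedge_eq_bivec, bivec_sq]
    convert zero_smul ℂ _ using 2
    ring
end

section
/- Let A be a 4×4 complex matrix, acting on 2-vectors of ℂ⁴ by the derivation rule A·(v∧w) = (A v)∧w + v∧(A w). Then A·(e₁∧e₂) = 0 and A·(e₃∧e₄) = 0 hold simultaneously if and only if A is block diagonal with traceless 2×2 blocks; explicitly, if and only if A i j = 0 whenever exactly one of the indices i, j lies in {1,2} (i.e., the off-diagonal 2×2 blocks vanish) and A₁₁ + A₂₂ = 0 and A₃₃ + A₄₄ = 0. -/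
/-- The standard basis of `ℂ⁴`. -/
def e (i : Fin 4) : Fin 4 → ℂ := Pi.single i 1

/-- The derivation action of a matrix `A` on the 2-vector `v∧w`:
`A·(v∧w) = (Av)∧w + v∧(Aw)`. -/
noncomputable def derAct (A : Matrix (Fin 4) (Fin 4) ℂ) (v w : Fin 4 → ℂ) :
    ExteriorAlgebra ℂ (Fin 4 → ℂ) :=
  ι4 (A.mulVec v) * ι4 w + ι4 v * ι4 (A.mulVec w)

/-- The `(i, j)` Plücker coordinate on the exterior algebra of `ℂ⁴`. -/
theorem exists_minor (i j : Fin 4) : ∃ f : ExteriorAlgebra ℂ (Fin 4 → ℂ) →ₗ[ℂ] ℂ,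
    ∀ v w : Fin 4 → ℂ, f (ι4 v * ι4 w) = v i * w j - v j * w i := by
  let g : (Fin 4 → ℂ) [⋀^Fin 2]→ₗ[ℂ] ℂ :=
    (Matrix.detRowAlternating (n := Fin 2) (R := ℂ)).compLinearMap
      (LinearMap.funLeft ℂ ℂ ![i, j])
  let F : ∀ n, (Fin 4 → ℂ) [⋀^Fin n]→ₗ[ℂ] ℂ := fun n =>
    match n with
    | 2 => g
    | _ => 0
  refine ⟨ExteriorAlgebra.liftAlternating F, fun v w => ?_⟩
  have h : ι4 v * ι4 w = ExteriorAlgebra.ιMulti ℂ 2 ![v, w] := by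
    simp [ExteriorAlgebra.ιMulti_apply, ι4]
  rw [h, ExteriorAlgebra.liftAlternating_apply_ιMulti]
  change Matrix.det (Matrix.of (fun k : Fin 2 => (LinearMap.funLeft ℂ ℂ ![i, j] (![v, w] k) : Fin 2 → ℂ))) = _
  rw [Matrix.det_fin_two]
  simp [LinearMap.funLeft_apply]

theorem minor_derAct (A : Matrix (Fin 4) (Fin 4) ℂ) (k l : Fin 4)
    (h : derAct A (e k) (e l) = 0) (i j : Fin 4) :
    A i k * e l j - A j k * e l i + (e k i * A j l - e k j * A i l) = 0 := by
  obtain ⟨f, hf⟩ := exists_minor i j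
  have := congrArg f h
  simpa [derAct, hf, e] using this

theorem mulVec_e (A : Matrix (Fin 4) (Fin 4) ℂ) (k : Fin 4) :
    A.mulVec (e k) = A 0 k • e 0 + A 1 k • e 1 + A 2 k • e 2 + A 3 k • e 3 := by
  ext i
  fin_cases i <;> simp [e]

theorem derAct_zero (A : Matrix (Fin 4) (Fin 4) ℂ) (k l : Fin 4) (h : A k k + A l l = 0)
    (hk : A.mulVec (e k) = A k k • e k + A l k • e l)
    (hl : A.mulVec (e l) = A k l • e k + A l l • e l) : derAct A (e k) (e l) = 0 := by
  have sq : ∀ v, ι4 v * ι4 v = 0 := fun v => ExteriorAlgebra.ι_sq_zero v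
  rw [derAct, hk, hl]
  simp only [map_add, map_smul, add_mul, mul_add, smul_mul_assoc, mul_smul_comm, sq, smul_zero,
    add_zero, zero_add]
  rw [← add_smul, h, zero_smul]

/-- `A·(e₁∧e₂) = 0` and `A·(e₃∧e₄) = 0` hold simultaneously if and only if `A` is
block diagonal (the entries `A i j` with exactly one of `i, j` among the first two
indices vanish) with traceless 2×2 diagonal blocks. -/
theorem derAct_annihilates_iff_blockDiag_traceless (A : Matrix (Fin 4) (Fin 4) ℂ) :
    (derAct A (e 0) (e 1) = 0 ∧ derAct A (e 2) (e 3) = 0) ↔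
      ((∀ i j : Fin 4, ((i.val < 2 ∧ 2 ≤ j.val) ∨ (2 ≤ i.val ∧ j.val < 2)) → A i j = 0) ∧
        A 0 0 + A 1 1 = 0 ∧ A 2 2 + A 3 3 = 0) := by
  constructor
  · rintro ⟨h1, h2⟩
    have m1 := minor_derAct A 0 1 h1
    have m2 := minor_derAct A 2 3 h2
    have a1 := m1 0 1
    have a2 := m1 0 2
    have a3 := m1 0 3
    have a4 := m1 1 2
    have a5 := m1 1 3
    have b1 := m2 2 3
    have b2 := m2 2 0
    have b3 := m2 2 1
    have b4 := m2 3 0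
    have b5 := m2 3 1
    simp [e] at a1 a2 a3 a4 a5 b1 b2 b3 b4 b5
    refine ⟨fun i j hij => ?_, a1, b1⟩
    fin_cases i <;> fin_cases j <;> simp at hij <;> assumption
  · rintro ⟨h, h1, h2⟩
    refine ⟨derAct_zero A 0 1 h1 ?_ ?_, derAct_zero A 2 3 h2 ?_ ?_⟩
    · simp [mulVec_e, h 2 0, h 3 0]
    · simp [mulVec_e, h 2 1, h 3 1]
    · simp [mulVec_e, h 0 2, h 1 2]
    · simp [mulVec_e, h 0 3, h 1 3]
end
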